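/- arXiv:1708.07395 — 5 statements merged into one kernel-verified Lean document; each statement's English description precedes it below -/
import Mathlib

section
/- Let n ≥ 1 and let a₁,…,aₙ be positive reals; let A : ℂⁿ → ℂⁿ be the diagonal map (Az)ⱼ = aⱼzⱼ, and A^{1/2}, A^{−1} the diagonal maps with entries aⱼ^{1/2}, aⱼ^{−1}. Let f, g : ℝ → ℝ be C¹ functions with f nonvanishing, and let y : ℝ → ℂⁿ be a C² curve with ⟨A² y(t), y(t)⟩ = 1 for all t, y'(0) ≠ 0, and y''(t) = (f'(t)/f(t))·y'(t) + g(t)·A² y(t) for all t, where ⟨u,v⟩ = Re(∑ⱼ uⱼ·conj(vⱼ)). Set x(t) = A^{1/2} y(t). Then there exists a constant c > 0 such that the curve x̄(t) := (c/f(t))·(i·A^{−1} x'(t)) satisfies, for all t: ⟨A x(t), x(t)⟩ = 1, ⟨A x̄(t), x̄(t)⟩ = 1, x'(t) ∈ ℝ·(i·A x̄(t)), and x̄'(t) ∈ ℝ·(i·A x(t)). -/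
/-- The real inner product `⟨u,v⟩ = Re (∑ⱼ uⱼ conj vⱼ)` on `ℂⁿ ≅ ℝ^{2n}`. -/
noncomputable def rinner {n : ℕ} (u v : EuclideanSpace ℂ (Fin n)) : ℝ :=
  (inner ℂ u v : ℂ).re

/-!
With the integrating factor `1 / f`, the geodesic equation says that `w = y' / f` satisfies
`w' = (g / f) A² y`. Since `⟨A² y, y⟩` is constant, `y'` is orthogonal to `A² y`, so `w` has
constant norm, and `c` is the inverse of this norm. If `S` is a symmetric square root of `A`, then
`x = S y` and `x̄ = c i S⁻¹ w`, whence `⟨A x̄, x̄⟩ = c² ‖w‖²`, while `x'` is a multiple of `S w`,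
that is of `i A x̄`, and `x̄' = (c g / f) i A x`.
-/

section IntegratingFactor

variable {𝕜 E : Type*} [NontriviallyNormedField 𝕜] [NormedAddCommGroup E] [NormedSpace 𝕜 E]

theorem hasDerivAt_inv_smul {f : 𝕜 → 𝕜} {v : 𝕜 → E} {f' : 𝕜} {w : E} {t : 𝕜}
    (hf : HasDerivAt f f' t) (hf0 : f t ≠ 0)
    (hv : HasDerivAt v ((f' / f t) • v t + w) t) :
    HasDerivAt (fun u ↦ (f u)⁻¹ • v u) ((f t)⁻¹ • w) t := by
  convert (hf.fun_inv hf0).fun_smul hv using 1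
  module

end IntegratingFactor

section Geodesic

variable {E : Type*} [NormedAddCommGroup E] [InnerProductSpace ℝ E]

theorem norm_eq_of_inner_deriv_eq_zero {w w' : ℝ → E} (hw : ∀ t, HasDerivAt w (w' t) t)
    (horth : ∀ t, inner ℝ (w t) (w' t) = 0) (s t : ℝ) : ‖w s‖ = ‖w t‖ := by
  have hsq (t : ℝ) : HasDerivAt (fun u ↦ ‖w u‖ ^ 2) 0 t := by
    simpa only [horth, mul_zero] using (hw t).norm_sq
  have hconst := is_const_of_deriv_eq_zero (fun t ↦ (hsq t).differentiableAt)
    (fun t ↦ (hsq t).deriv) s t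
  exact (sq_eq_sq₀ (norm_nonneg _) (norm_nonneg _)).mp hconst

variable {B : E →L[ℝ] E} {y v : ℝ → E}

theorem inner_apply_deriv_eq_zero {r t : ℝ} {y' : E} (hB : B.toLinearMap.IsSymmetric)
    (hquad : ∀ t, inner ℝ (B (y t)) (y t) = r) (hy : HasDerivAt y y' t) :
    inner ℝ (B (y t)) y' = 0 := by
  have hderiv := (B.hasFDerivAt.comp_hasDerivAt t hy).inner ℝ hy
  simp only [Function.comp_apply, hquad] at hderiv
  have hsum := hderiv.unique (hasDerivAt_const t r)
  have hsymm : inner ℝ (B y') (y t) = inner ℝ (B (y t)) y' := by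
    rw [real_inner_comm]
    exact (hB (y t) y').symm
  linarith

theorem norm_inv_smul_velocity_eq {f f' g : ℝ → ℝ} {r : ℝ} (hB : B.toLinearMap.IsSymmetric)
    (hquad : ∀ t, inner ℝ (B (y t)) (y t) = r)
    (hf : ∀ t, HasDerivAt f (f' t) t) (hf0 : ∀ t, f t ≠ 0) (hy : ∀ t, HasDerivAt y (v t) t)
    (hv : ∀ t, HasDerivAt v ((f' t / f t) • v t + g t • B (y t)) t) (s t : ℝ) :
    ‖(f s)⁻¹ • v s‖ = ‖(f t)⁻¹ • v t‖ := by
  refine norm_eq_of_inner_deriv_eq_zero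
    (fun t ↦ hasDerivAt_inv_smul (hf t) (hf0 t) (hv t)) (fun t ↦ ?_) s t
  have horth : inner ℝ (v t) (B (y t)) = 0 := by
    rw [real_inner_comm]
    exact inner_apply_deriv_eq_zero hB hquad (hy t)
  simp only [real_inner_smul_left, real_inner_smul_right, horth, mul_zero]

end Geodesic

theorem re_inner_apply_apply_self_of_isSymmetric {𝕜 E : Type*} [RCLike 𝕜] [NormedAddCommGroup E]
    [InnerProductSpace 𝕜 E] {T : E →ₗ[𝕜] E} (hT : T.IsSymmetric) (z : E) :
    RCLike.re (inner 𝕜 (T (T z)) z) = ‖T z‖ ^ 2 := by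
  rw [hT, inner_self_eq_norm_sq]

theorem norm_inv_smul_velocity_eq_of_complex {E : Type*} [NormedAddCommGroup E]
    [InnerProductSpace ℂ E] {B : E →L[ℂ] E} {y v : ℝ → E} {f f' g : ℝ → ℝ} {r : ℝ}
    (hB : B.toLinearMap.IsSymmetric) (hquad : ∀ t, (inner ℂ (B (y t)) (y t)).re = r)
    (hf : ∀ t, HasDerivAt f (f' t) t) (hf0 : ∀ t, f t ≠ 0) (hy : ∀ t, HasDerivAt y (v t) t)
    (hv : ∀ t, HasDerivAt v ((f' t / f t) • v t + g t • B (y t)) t) (s t : ℝ) :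
    ‖(f s)⁻¹ • v s‖ = ‖(f t)⁻¹ • v t‖ :=
  letI := InnerProductSpace.complexToReal (G := E)
  norm_inv_smul_velocity_eq (B := B.restrictScalars ℝ) hB.restrictScalars hquad hf hf0 hy hv s t

section SquareRoot

variable {R M : Type*} [Semiring R] [AddCommMonoid M] [Module R M] [TopologicalSpace M]
  {A : M ≃L[R] M} {S : M →L[R] M}

theorem apply_comm_of_sq_eq (hSA : ∀ z, S (S z) = A z) (z : M) : A (S z) = S (A z) := by
  rw [← hSA (S z), hSA z]

theorem symm_apply_comm_of_sq_eq (hSA : ∀ z, S (S z) = A z) (z : M) :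
    A.symm (S z) = S (A.symm z) := by
  rw [A.symm_apply_eq, apply_comm_of_sq_eq hSA, A.apply_symm_apply]

theorem apply_symm_apply_of_sq_eq (hSA : ∀ z, S (S z) = A z) (z : M) : S (A.symm (S z)) = z := by
  rw [symm_apply_comm_of_sq_eq hSA, hSA, A.apply_symm_apply]

end SquareRoot

section CompanionCurve

variable {E : Type*} [NormedAddCommGroup E] [NormedSpace ℂ E] {A : E ≃L[ℂ] E} {S : E →L[ℂ] E}

theorem I_smul_apply_smul_I_smul_symm (r : ℝ) (z : E) :
    Complex.I • A (r • Complex.I • A.symm z) = -(r • z) := by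
  rw [← A.coe_coe, ContinuousLinearMap.map_smul_of_tower, map_smul, A.coe_coe, A.apply_symm_apply,
    smul_comm Complex.I r, smul_smul, Complex.I_mul_I, neg_one_smul, smul_neg]

theorem norm_apply_smul_I_smul_symm_apply (hSA : ∀ z, S (S z) = A z) (r : ℝ) (z : E) :
    ‖S (r • Complex.I • A.symm (S z))‖ = ‖r • z‖ := by
  rw [S.map_smul_of_tower, map_smul, apply_symm_apply_of_sq_eq hSA, norm_smul, norm_smul,
    norm_smul, Complex.norm_I, one_mul]

theorem hasDerivAt_div_smul_I_smul_symm {f : ℝ → ℝ} {v : ℝ → E} {t f' g : ℝ} {z : E}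
    (hSA : ∀ z, S (S z) = A z) (hf : HasDerivAt f f' t) (hf0 : f t ≠ 0)
    (hv : HasDerivAt v ((f' / f t) • v t + g • A (A z)) t) (c : ℝ) :
    HasDerivAt (fun u ↦ (c / f u) • (Complex.I • A.symm (S (v u))))
      ((c * g / f t) • (Complex.I • A (S z))) t := by
  let L : E →L[ℝ] E := (Complex.I • A.symm.toContinuousLinearMap.comp S).restrictScalars ℝ
  have hLA : L (A (A z)) = Complex.I • A (S z) := by
    change Complex.I • A.symm (S (A (A z))) = _
    rw [symm_apply_comm_of_sq_eq hSA, A.symm_apply_apply, apply_comm_of_sq_eq hSA]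
  have hL := (L.hasFDerivAt.comp_hasDerivAt t (hasDerivAt_inv_smul hf hf0 hv)).const_smul c
  convert hL using 1
  · ext u
    change (c / f u) • L (v u) = c • L ((f u)⁻¹ • v u)
    rw [map_smul, smul_smul, div_eq_mul_inv]
  · rw [map_smul, map_smul, hLA]
    module

end CompanionCurve

section SymplecticBilliard

variable {E : Type*} [NormedAddCommGroup E] [InnerProductSpace ℂ E]
  {A : E ≃L[ℂ] E} {S : E →L[ℂ] E}

theorem isSymmetric_of_sq_eq (hS : S.toLinearMap.IsSymmetric) (hSA : ∀ z, S (S z) = A z) :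
    A.toContinuousLinearMap.toLinearMap.IsSymmetric := by
  convert hS.pow 2
  ext z
  exact (hSA z).symm

theorem stmt_14_general (hS : S.toLinearMap.IsSymmetric) (hSA : ∀ z, S (S z) = A z)
    {f g : ℝ → ℝ} (hf : Differentiable ℝ f) (hf0 : ∀ t, f t ≠ 0)
    {y : ℝ → E} (hy : Differentiable ℝ y) (hy' : Differentiable ℝ (deriv y))
    (hnorm : ∀ t, (inner ℂ (A (A (y t))) (y t)).re = 1) (hy'0 : deriv y 0 ≠ 0)
    (hgeo : ∀ t, deriv (deriv y) t = (deriv f t / f t) • deriv y t + g t • A (A (y t)))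
    {x : ℝ → E} (hx : ∀ t, x t = S (y t)) :
    ∃ c : ℝ, 0 < c ∧ ∀ t,
      (inner ℂ (A (x t)) (x t)).re = 1 ∧
      (inner ℂ (A ((c / f t) • (Complex.I • A.symm (deriv x t))))
          ((c / f t) • (Complex.I • A.symm (deriv x t)))).re = 1 ∧
      (∃ s : ℝ, deriv x t = s • (Complex.I • A ((c / f t) • (Complex.I • A.symm (deriv x t))))) ∧
      (∃ s : ℝ, deriv (fun u ↦ (c / f u) • (Complex.I • A.symm (deriv x u))) t
          = s • (Complex.I • A (x t))) := by
  have hA := isSymmetric_of_sq_eq hS hSA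
  have hf' (t : ℝ) := (hf t).hasDerivAt
  have hv (t : ℝ) : HasDerivAt (deriv y) ((deriv f t / f t) • deriv y t + g t • A (A (y t))) t :=
    hgeo t ▸ (hy' t).hasDerivAt
  have hspeed (t : ℝ) : ‖(f t)⁻¹ • deriv y t‖ = ‖(f 0)⁻¹ • deriv y 0‖ :=
    norm_inv_smul_velocity_eq_of_complex (B := A.toContinuousLinearMap ^ 2)
      (hA.pow 2) hnorm hf' hf0 (fun t ↦ (hy t).hasDerivAt) hv t 0
  have hspeed_pos : 0 < ‖(f 0)⁻¹ • deriv y 0‖ :=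
    norm_pos_iff.mpr (smul_ne_zero (inv_ne_zero (hf0 0)) hy'0)
  obtain ⟨c, hc, hcspeed⟩ : ∃ c : ℝ, 0 < c ∧ c * ‖(f 0)⁻¹ • deriv y 0‖ = 1 :=
    ⟨_, inv_pos.mpr hspeed_pos, inv_mul_cancel₀ hspeed_pos.ne'⟩
  have hx' : deriv x = fun t ↦ S (deriv y t) := by
    rw [funext hx]
    exact funext fun t ↦
      ((S.restrictScalars ℝ).hasFDerivAt.comp_hasDerivAt t (hy t).hasDerivAt).deriv
  have hquad (z : E) : (inner ℂ (A z) z).re = ‖S z‖ ^ 2 :=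
    hSA z ▸ re_inner_apply_apply_self_of_isSymmetric hS z
  refine ⟨c, hc, fun t ↦ ⟨?_, ?_, ⟨-(f t / c), ?_⟩, ⟨c * g t / f t, ?_⟩⟩⟩
  · rw [hquad, hx, hSA, ← hnorm t]
    exact (re_inner_apply_apply_self_of_isSymmetric hA (y t)).symm
  · rw [hquad, hx', norm_apply_smul_I_smul_symm_apply hSA, div_eq_mul_inv, mul_smul, norm_smul,
      hspeed, Real.norm_of_nonneg hc.le, hcspeed, one_pow]
  · rw [I_smul_apply_smul_I_smul_symm, smul_neg, neg_smul, neg_neg, smul_smul,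
      div_mul_div_cancel₀ hc.ne', div_self (hf0 t), one_smul]
  · rw [hx', hx]
    exact (hasDerivAt_div_smul_I_smul_symm hSA (hf' t) (hf0 t) (hv t) c).deriv

end SymplecticBilliard

section Diagonal

variable {𝕜 ι : Type*} [RCLike 𝕜] [Fintype ι] [DecidableEq ι]

/-- The diagonal operator `z ↦ (dⱼ zⱼ)ⱼ` with real entries `dⱼ`, as a continuous linear map. -/
noncomputable def diagonalCLM (𝕜 : Type*) [RCLike 𝕜] (d : ι → ℝ) :
    EuclideanSpace 𝕜 ι →L[𝕜] EuclideanSpace 𝕜 ι :=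
  Matrix.toEuclideanCLM (n := ι) (𝕜 := 𝕜) (Matrix.diagonal fun j ↦ (d j : 𝕜))

theorem diagonalCLM_apply (d : ι → ℝ) (z : EuclideanSpace 𝕜 ι) (j : ι) :
    diagonalCLM 𝕜 d z j = (d j : 𝕜) * z j := by
  simp only [diagonalCLM, Matrix.ofLp_toEuclideanCLM, Matrix.mulVec_diagonal]

theorem eq_diagonalCLM {T : EuclideanSpace 𝕜 ι → EuclideanSpace 𝕜 ι} {d : ι → ℝ}
    (hT : ∀ z j, T z j = (d j : 𝕜) * z j) : T = diagonalCLM 𝕜 d := by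
  ext z j
  rw [hT, diagonalCLM_apply]

theorem diagonalCLM_sqrt_apply_diagonalCLM_sqrt {d : ι → ℝ} (hd : ∀ j, 0 ≤ d j)
    (z : EuclideanSpace 𝕜 ι) :
    diagonalCLM 𝕜 (fun j ↦ √(d j)) (diagonalCLM 𝕜 (fun j ↦ √(d j)) z) = diagonalCLM 𝕜 d z := by
  ext j
  rw [diagonalCLM_apply, diagonalCLM_apply, diagonalCLM_apply, ← mul_assoc, ← RCLike.ofReal_mul,
    Real.mul_self_sqrt (hd j)]

theorem isSymmetric_diagonalCLM (d : ι → ℝ) : (diagonalCLM 𝕜 d).toLinearMap.IsSymmetric := by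
  refine Matrix.isSymmetric_toEuclideanLin_iff.mpr (Matrix.isHermitian_diagonal_iff.mpr fun j ↦ ?_)
  exact RCLike.conj_ofReal _

theorem diagonalCLM_comp_inv {d : ι → ℝ} (hd : ∀ j, d j ≠ 0) :
    (diagonalCLM 𝕜 d).comp (diagonalCLM 𝕜 d⁻¹) = ContinuousLinearMap.id 𝕜 _ := by
  ext z j
  simp [diagonalCLM_apply, hd]

/-- The diagonal operator with nonzero real entries `dⱼ`, as a continuous linear equivalence. -/
noncomputable def diagonalCLE (𝕜 : Type*) [RCLike 𝕜] (d : ι → ℝ) (hd : ∀ j, d j ≠ 0) :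
    EuclideanSpace 𝕜 ι ≃L[𝕜] EuclideanSpace 𝕜 ι :=
  .equivOfInverse' (diagonalCLM 𝕜 d) (diagonalCLM 𝕜 d⁻¹) (diagonalCLM_comp_inv hd)
    (by simpa using diagonalCLM_comp_inv (d := d⁻¹) fun j ↦ inv_ne_zero (hd j))

end Diagonal

/-- Let `A` be the diagonal map `(Az)ⱼ = aⱼzⱼ` (`aⱼ > 0`), and `A^{1/2}`,
`A^{−1}` the diagonal maps with entries `aⱼ^{1/2}`, `aⱼ^{−1}`.  Let `y` be a `C²` geodesic-type
curve on the ellipsoid `⟨A²y,y⟩ = 1` with `y'(0) ≠ 0` and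
`y'' = (f'/f)·y' + g·A²y` (`f` nonvanishing `C¹`, `g` `C¹`).  Set `x = A^{1/2}y`.  Then there
is a constant `c > 0` such that `x̄(t) = (c/f(t))·(i·A⁻¹x'(t))` satisfies: both `x` and `x̄`
lie on the ellipsoid `⟨Aξ,ξ⟩ = 1`, `x'(t) ∈ ℝ·(i·A x̄(t))` and `x̄'(t) ∈ ℝ·(i·A x(t))`. -/
theorem stmt_14 (n : ℕ) (hn : 1 ≤ n) (a : Fin n → ℝ) (ha : ∀ j, 0 < a j)
    (A Asqrt Ainv : EuclideanSpace ℂ (Fin n) → EuclideanSpace ℂ (Fin n))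
    (hA : ∀ z j, A z j = (a j : ℂ) * z j)
    (hAsqrt : ∀ z j, Asqrt z j = ((Real.sqrt (a j) : ℝ) : ℂ) * z j)
    (hAinv : ∀ z j, Ainv z j = (((a j)⁻¹ : ℝ) : ℂ) * z j)
    (f g : ℝ → ℝ) (hf : ContDiff ℝ 1 f) (hg : ContDiff ℝ 1 g) (hf0 : ∀ t, f t ≠ 0)
    (y : ℝ → EuclideanSpace ℂ (Fin n)) (hy : ContDiff ℝ 2 y)
    (hnorm : ∀ t, rinner (A (A (y t))) (y t) = 1)
    (hy'0 : deriv y 0 ≠ 0)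
    (hgeo : ∀ t, deriv (deriv y) t
        = (deriv f t / f t) • deriv y t + g t • A (A (y t)))
    (x : ℝ → EuclideanSpace ℂ (Fin n)) (hx : ∀ t, x t = Asqrt (y t)) :
    ∃ c : ℝ, 0 < c ∧ ∀ t,
      rinner (A (x t)) (x t) = 1 ∧
      rinner (A ((c / f t) • (Complex.I • Ainv (deriv x t))))
          ((c / f t) • (Complex.I • Ainv (deriv x t))) = 1 ∧
      (∃ s : ℝ, deriv x t = s • (Complex.I • A ((c / f t) • (Complex.I • Ainv (deriv x t))))) ∧
      (∃ s : ℝ, deriv (fun u => (c / f u) • (Complex.I • Ainv (deriv x u))) t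
          = s • (Complex.I • A (x t))) := by
  obtain rfl := eq_diagonalCLM hA
  obtain rfl := eq_diagonalCLM hAsqrt
  obtain rfl := eq_diagonalCLM hAinv
  exact stmt_14_general (A := diagonalCLE ℂ a fun j ↦ (ha j).ne') (isSymmetric_diagonalCLM _)
    (diagonalCLM_sqrt_apply_diagonalCLM_sqrt fun j ↦ (ha j).le) (hf.differentiable one_ne_zero) hf0
    (hy.differentiable two_ne_zero) hy.differentiable_deriv_two hnorm hy'0 hgeo hx
end

section
/- Let n ≥ 1 and let a₁,…,aₙ be positive reals; define R : ℂⁿ → ℂⁿ by (Rz)ⱼ = (i/aⱼ)·zⱼ, and let ⟨u,v⟩ = Re(∑ⱼ uⱼ·conj(vⱼ)) be the real inner product on ℂⁿ. Let Z₀, Z₁ ∈ ℂⁿ with Z₁ ≠ 0, and set Z₂ = Z₀ + (2⟨R Z₀, Z₁⟩/‖R Z₁‖²)·R Z₁. Then: (a) ⟨R Z₁, Z₂⟩ = ⟨R Z₀, Z₁⟩; and (b) for every index k ∈ {1,…,n}, Re((Z₁)ₖ · conj((Z₂)ₖ)) = Re((Z₀)ₖ · conj((Z₁)ₖ)). -/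
/-!
`R` is skew-symmetric for the real inner product and acts coordinatewise by skew-symmetric maps.
Moving `Z₀` along `R Z₁` changes `⟪R Z₁, Z₀⟫ = -⟪R Z₀, Z₁⟫` by `2 * ⟪R Z₀, Z₁⟫`, the step length
being chosen to flip exactly this sign. In each coordinate the displacement is orthogonal to `Z₁`,
so it does not affect the products `⟪Z₀ k, Z₁ k⟫`.
-/

open scoped RealInnerProductSpace ComplexConjugate

section SkewSymmetric

variable {E : Type*} [NormedAddCommGroup E] [InnerProductSpace ℝ E]

/-- Skew-symmetry of a map with respect to the real inner product. It is stated for bare functions,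
as the characteristic operator is given as one; linearity is a consequence. -/
def IsSkewSymmetric (A : E → E) : Prop :=
  ∀ x y, ⟪A x, y⟫ = -⟪x, A y⟫

theorem IsSkewSymmetric.inner_self_right {A : E → E} (hA : IsSkewSymmetric A) (x : E) :
    ⟪x, A x⟫ = 0 := by
  have h : ⟪x, A x⟫ = -⟪x, A x⟫ := by rw [← hA x x, real_inner_comm]
  exact self_eq_neg.mp h

/-- The point `Z₂` which the symplectic billiard map with characteristic operator `R` puts after
`x = Z₀` and `y = Z₁`. -/
noncomputable def billiardStep (R : E → E) (x y : E) : E :=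
  x + (2 * ⟪R x, y⟫ / ‖R y‖ ^ 2) • R y

theorem IsSkewSymmetric.inner_billiardStep {R : E → E} (hR : IsSkewSymmetric R) (x : E) {y : E}
    (hy : R y ≠ 0) : ⟪R y, billiardStep R x y⟫ = ⟪R x, y⟫ := by
  have hnorm : ‖R y‖ ^ 2 ≠ 0 := pow_ne_zero 2 (norm_ne_zero_iff.mpr hy)
  have hflip : ⟪R y, x⟫ = -⟪R x, y⟫ := by rw [hR y x, real_inner_comm]
  calc ⟪R y, billiardStep R x y⟫
      = ⟪R y, x⟫ + 2 * ⟪R x, y⟫ / ‖R y‖ ^ 2 * ‖R y‖ ^ 2 := by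
        rw [billiardStep, inner_add_right, real_inner_smul_right, real_inner_self_eq_norm_sq]
    _ = -⟪R x, y⟫ + 2 * ⟪R x, y⟫ := by rw [hflip, div_mul_cancel₀ _ hnorm]
    _ = ⟪R x, y⟫ := by ring

end SkewSymmetric

section Coordinatewise

variable {ι : Type*} [Fintype ι] {E : ι → Type*} [∀ k, NormedAddCommGroup (E k)]
  [∀ k, InnerProductSpace ℝ (E k)] {A : ∀ k, E k → E k} {R : PiLp 2 E → PiLp 2 E}

theorem IsSkewSymmetric.of_coordinatewise (hA : ∀ k, IsSkewSymmetric (A k))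
    (hR : ∀ z k, R z k = A k (z k)) : IsSkewSymmetric R := by
  intro x y
  simp only [PiLp.inner_apply, hR, hA _ (x _), Finset.sum_neg_distrib]

theorem inner_billiardStep_apply (hA : ∀ k, IsSkewSymmetric (A k))
    (hR : ∀ z k, R z k = A k (z k)) (x y : PiLp 2 E) (k : ι) :
    ⟪y k, billiardStep R x y k⟫ = ⟪y k, x k⟫ := by
  have horth : ⟪y k, R y k⟫ = 0 := by rw [hR, (hA k).inner_self_right]
  rw [billiardStep, PiLp.add_apply, PiLp.smul_apply, inner_add_right, real_inner_smul_right,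
    horth, mul_zero, add_zero]

theorem stmt_15_general (hA : ∀ k, IsSkewSymmetric (A k)) (hR : ∀ z k, R z k = A k (z k))
    (Z₀ Z₁ : PiLp 2 E) (hRZ₁ : R Z₁ ≠ 0) :
    ⟪R Z₁, billiardStep R Z₀ Z₁⟫ = ⟪R Z₀, Z₁⟫ ∧
      ∀ k, ⟪Z₁ k, billiardStep R Z₀ Z₁ k⟫ = ⟪Z₀ k, Z₁ k⟫ :=
  ⟨(IsSkewSymmetric.of_coordinatewise hA hR).inner_billiardStep Z₀ hRZ₁, fun k =>
    (inner_billiardStep_apply hA hR Z₀ Z₁ k).trans (real_inner_comm _ _)⟩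

end Coordinatewise

theorem isSkewSymmetric_mul_left {c : ℂ} (hc : c ∈ skewAdjoint ℂ) :
    IsSkewSymmetric fun z : ℂ => c * z := by
  intro z w
  have hconj : conj c = -c := skewAdjoint.mem_iff.mp hc
  rw [Complex.inner, Complex.inner, map_mul, hconj, ← Complex.neg_re]
  congr 1
  ring

theorem I_div_ofReal_mem_skewAdjoint (r : ℝ) : Complex.I / (r : ℂ) ∈ skewAdjoint ℂ := by
  rw [skewAdjoint.mem_iff, ← starRingEnd_apply, map_div₀, Complex.conj_I, Complex.conj_ofReal,
    neg_div]

theorem re_mul_conj_eq_inner (z w : ℂ) : (z * conj w).re = ⟪z, w⟫ := by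
  rw [real_inner_comm, Complex.inner, mul_comm]

theorem rinner_eq_inner {n : ℕ} (u v : EuclideanSpace ℂ (Fin n)) : rinner u v = ⟪u, v⟫ := by
  simp only [rinner, PiLp.inner_apply, Complex.re_sum, RCLike.inner_apply,
    Complex.inner]

theorem ne_zero_of_coordinatewise {ι : Type*} {p : ENNReal} {E : ι → Type*}
    [∀ k, AddCommGroup (E k)] {A : ∀ k, E k → E k} {R : PiLp p E → PiLp p E}
    (hR : ∀ z k, R z k = A k (z k)) (hA : ∀ k w, A k w = 0 → w = 0) {z : PiLp p E} (hz : z ≠ 0) :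
    R z ≠ 0 := by
  contrapose! hz with hRz
  ext k
  exact hA k (z k) (by rw [← hR, hRz, WithLp.ofLp_zero, Pi.zero_apply])

/-- For the symplectic billiard map in the unit sphere of `ℂⁿ` with
characteristic operator `(Rz)ⱼ = (i/aⱼ)zⱼ`, sending `(Z₀,Z₁)` to `(Z₁,Z₂)` with
`Z₂ = Z₀ + (2⟨RZ₀,Z₁⟩/‖RZ₁‖²)·RZ₁`, the quantities `J = ⟨RZ₀,Z₁⟩` and
`Iₖ = Re((Z₀)ₖ·conj((Z₁)ₖ))` are integrals of motion. -/
theorem stmt_15 (n : ℕ) (hn : 1 ≤ n) (a : Fin n → ℝ) (ha : ∀ j, 0 < a j)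
    (R : EuclideanSpace ℂ (Fin n) → EuclideanSpace ℂ (Fin n))
    (hR : ∀ z j, R z j = (Complex.I / (a j : ℂ)) * z j)
    (Z₀ Z₁ Z₂ : EuclideanSpace ℂ (Fin n)) (hZ₁ : Z₁ ≠ 0)
    (hZ₂ : Z₂ = Z₀ + ((2 * rinner (R Z₀) Z₁) / ‖R Z₁‖ ^ 2) • R Z₁) :
    rinner (R Z₁) Z₂ = rinner (R Z₀) Z₁ ∧
    ∀ k : Fin n, (Z₁ k * (starRingEnd ℂ) (Z₂ k)).re
      = (Z₀ k * (starRingEnd ℂ) (Z₁ k)).re := by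
  have hcoeff (j : Fin n) : Complex.I / (a j : ℂ) ≠ 0 :=
    div_ne_zero Complex.I_ne_zero (Complex.ofReal_ne_zero.mpr (ha j).ne')
  have hRZ₁ : R Z₁ ≠ 0 :=
    ne_zero_of_coordinatewise hR (fun j _ h => (mul_eq_zero.mp h).resolve_left (hcoeff j)) hZ₁
  have hstep : Z₂ = billiardStep R Z₀ Z₁ := by rw [hZ₂, billiardStep, rinner_eq_inner]
  simpa only [hstep, rinner_eq_inner, re_mul_conj_eq_inner] using stmt_15_general
    (fun k => isSkewSymmetric_mul_left (I_div_ofReal_mem_skewAdjoint (a k))) hR Z₀ Z₁ hRZ₁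
end

section
/- Let n ≥ 1 and let a₁ < a₂ < … < aₙ be positive reals; define R : ℂⁿ → ℂⁿ by (Rz)ⱼ = (i/aⱼ)·zⱼ. Let k be an integer with 2 ≤ k < 2n and let Z₁, …, Z_k ∈ ℂⁿ (indices mod k) be unit vectors such that for every j there is a real tⱼ > 0 with Z_{j+1} − Z_{j−1} = tⱼ·R(Zⱼ). Then there exists a subset S ⊆ {1,…,n} with card(S) ≤ ⌊k/2⌋ such that (Zⱼ)ₘ = 0 for every j and every coordinate index m ∉ S; that is, the orbit is contained in the complex coordinate subspace spanned by the coordinate lines indexed by S, whose real dimension 2·card(S) is at most k if k is even and at most k − 1 if k is odd. -/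
/-! Read coordinatewise, the reflection law says that the sequence `j ↦ (Zⱼ)ₘ`, when it does not
vanish identically, is an eigenvector with eigenvalue `i/aₘ` of the real operator
`w ↦ ((w_{j+1} - w_{j-1})/tⱼ)ⱼ` on `ℂᵏ`. Eigenvalues of a real operator come in conjugate pairs,
so at most `k/2` of them lie in the open upper half-plane. -/

open Module ComplexConjugate

section Eigenvalues

theorem ncard_hasEigenvalue_le_finrank {K V : Type*} [Field K] [AddCommGroup V] [Module K V]
    [FiniteDimensional K V] (f : End K V) :
    {μ | f.HasEigenvalue μ}.ncard ≤ finrank K V := by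
  choose v hv using fun μ : {μ | f.HasEigenvalue μ} ↦ μ.2.exists_hasEigenvector
  have : Fintype {μ | f.HasEigenvalue μ} := f.finite_hasEigenvalue.fintype
  rw [← Nat.card_coe_set_eq, Nat.card_eq_fintype_card]
  exact (f.eigenvectors_linearIndependent _ v hv).fintype_card_le_finrank

theorem hasEigenvalue_star_of_map_star {R M : Type*} [CommRing R] [StarRing R]
    [AddCommGroup M] [Module R M] [StarAddMonoid M] [StarModule R M] {f : End R M}
    (hf : ∀ x, f (star x) = star (f x)) {μ : R} (hμ : f.HasEigenvalue μ) :
    f.HasEigenvalue (star μ) := by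
  obtain ⟨x, hx⟩ := hμ.exists_hasEigenvector
  refine End.hasEigenvalue_of_hasEigenvector (x := star x)
    (End.hasEigenvector_iff.2 ⟨End.mem_eigenspace_iff.2 ?_, star_ne_zero.2 hx.2⟩)
  rw [hf, hx.apply_eq_smul, star_smul]

theorem two_mul_ncard_hasEigenvalue_im_pos_le_finrank {V : Type*} [AddCommGroup V] [Module ℂ V]
    [StarAddMonoid V] [StarModule ℂ V] [FiniteDimensional ℂ V] {f : End ℂ V}
    (hf : ∀ x, f (star x) = star (f x)) :
    2 * {μ | f.HasEigenvalue μ ∧ 0 < μ.im}.ncard ≤ finrank ℂ V := by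
  set upper := {μ | f.HasEigenvalue μ ∧ 0 < μ.im}
  have upper_finite : upper.Finite := f.finite_hasEigenvalue.subset fun _ hμ ↦ hμ.1
  have upper_disjoint_conj : Disjoint upper (conj '' upper) := by
    rw [Set.disjoint_right]
    rintro _ ⟨μ, hμ, rfl⟩ hμ'
    have : 0 < -μ.im := hμ'.2
    linarith [hμ.2]
  have union_subset : upper ∪ conj '' upper ⊆ {μ | f.HasEigenvalue μ} := by
    rintro _ (hμ | ⟨μ, hμ, rfl⟩)
    · exact hμ.1
    · exact hasEigenvalue_star_of_map_star hf hμ.1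
  calc 2 * upper.ncard
      = upper.ncard + (conj '' upper).ncard := by
        rw [Set.ncard_image_of_injective _ (starRingEnd ℂ).injective, two_mul]
    _ = (upper ∪ conj '' upper).ncard :=
        (Set.ncard_union_eq upper_disjoint_conj upper_finite (upper_finite.image _)).symm
    _ ≤ {μ | f.HasEigenvalue μ}.ncard := Set.ncard_le_ncard union_subset f.finite_hasEigenvalue
    _ ≤ finrank ℂ V := ncard_hasEigenvalue_le_finrank f

end Eigenvalues

section WeightedCentralDifference

variable {K : Type*} [Field K] {k : ℕ}

/-- The weighted central difference operator `w ↦ ((w_{j+1} - w_{j-1}) / tⱼ)ⱼ` on `k`-periodic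
sequences. The nonzero coordinate sequences of a `k`-periodic symplectic billiard orbit with
parameters `tⱼ` are eigenvectors of it. -/
def weightedCentralDifference (t : ZMod k → K) : End K (ZMod k → K) where
  toFun w j := (w (j + 1) - w (j - 1)) / t j
  map_add' w₁ w₂ := by
    ext j
    simp only [Pi.add_apply]
    ring
  map_smul' c w := by
    ext j
    simp only [Pi.smul_apply, smul_eq_mul, RingHom.id_apply]
    ring

theorem weightedCentralDifference_apply (t w : ZMod k → K) (j : ZMod k) :
    weightedCentralDifference t w j = (w (j + 1) - w (j - 1)) / t j :=
  rfl

theorem weightedCentralDifference_star [StarRing K] {t : ZMod k → K} (ht : IsSelfAdjoint t)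
    (w : ZMod k → K) :
    weightedCentralDifference t (star w) = star (weightedCentralDifference t w) := by
  ext j
  have htj : star (t j) = t j := congrFun ht j
  simp only [weightedCentralDifference_apply, Pi.star_apply, star_div₀, star_sub, htj]

theorem hasEigenvalue_weightedCentralDifference {t w : ZMod k → K} {μ : K} (ht : ∀ j, t j ≠ 0)
    (hw : w ≠ 0) (hrec : ∀ j, w (j + 1) - w (j - 1) = t j * (μ * w j)) :
    (weightedCentralDifference t).HasEigenvalue μ := by
  refine End.hasEigenvalue_of_hasEigenvector (x := w)
    (End.hasEigenvector_iff.2 ⟨End.mem_eigenspace_iff.2 ?_, hw⟩)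
  ext j
  rw [weightedCentralDifference_apply, hrec, mul_div_cancel_left₀ _ (ht j), Pi.smul_apply,
    smul_eq_mul]

end WeightedCentralDifference

theorem stmt_16_general {ι : Type*} {a : ι → ℝ} (ha : ∀ m, 0 < a m) (ha_inj : a.Injective)
    {k : ℕ} [NeZero k] {Z : ZMod k → ι → ℂ} {t : ZMod k → ℝ} (ht : ∀ j, t j ≠ 0)
    (hrefl : ∀ j m, Z (j + 1) m - Z (j - 1) m = t j * (Complex.I / a m * Z j m)) :
    ∃ S : Finset ι, S.card ≤ k / 2 ∧ ∀ j, ∀ m ∉ S, Z j m = 0 := by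
  set D := weightedCentralDifference fun j ↦ (t j : ℂ)
  set support := {m | (fun j ↦ Z j m) ≠ 0}
  set upper := {μ | D.HasEigenvalue μ ∧ 0 < μ.im}
  have upper_finite : upper.Finite := D.finite_hasEigenvalue.subset fun _ hμ ↦ hμ.1
  have maps_to : Set.MapsTo (fun m ↦ Complex.I / a m) support upper := fun m hm ↦
    ⟨hasEigenvalue_weightedCentralDifference (fun j ↦ Complex.ofReal_ne_zero.2 (ht j)) hm
      (hrefl · m), by simp [Complex.div_ofReal_im, ha m]⟩
  have inj_on : support.InjOn fun m ↦ Complex.I / a m := fun m _ m' _ h ↦ ha_inj <| by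
    simpa [div_eq_mul_inv] using h
  have support_finite : support.Finite := .of_injOn maps_to inj_on upper_finite
  have card_support_le : support.ncard ≤ upper.ncard :=
    Set.ncard_le_ncard_of_injOn _ maps_to inj_on upper_finite
  have card_upper_le : 2 * upper.ncard ≤ k := by
    simpa using two_mul_ncard_hasEigenvalue_im_pos_le_finrank
      (weightedCentralDifference_star (funext fun j ↦ Complex.conj_ofReal (t j)))
  refine ⟨support_finite.toFinset, ?_, fun j m hm ↦ ?_⟩
  · rw [← Set.ncard_eq_toFinset_card _ support_finite]
    lia
  · rw [Set.Finite.mem_toFinset] at hm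
    exact congrFun (not_not.1 hm) j

/-- Let `0 < a₁ < … < aₙ` and `(Rz)ⱼ = (i/aⱼ)zⱼ`.  If `Z₁,…,Z_k`
(indices mod `k`, `2 ≤ k < 2n`) are unit vectors with `Z_{j+1} − Z_{j−1} = tⱼ·R(Zⱼ)`,
`tⱼ > 0` (a `k`-periodic symplectic billiard orbit), then the orbit lies in a complex
coordinate subspace spanned by at most `⌊k/2⌋` coordinate lines. -/
theorem stmt_16 (n : ℕ) (hn : 1 ≤ n) (a : Fin n → ℝ) (ha : ∀ j, 0 < a j)
    (hmono : StrictMono a)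
    (R : EuclideanSpace ℂ (Fin n) → EuclideanSpace ℂ (Fin n))
    (hR : ∀ z j, R z j = (Complex.I / (a j : ℂ)) * z j)
    (k : ℕ) (hk2 : 2 ≤ k) (hk : k < 2 * n)
    (Z : ZMod k → EuclideanSpace ℂ (Fin n)) (hZ : ∀ j, ‖Z j‖ = 1)
    (t : ZMod k → ℝ) (ht : ∀ j, 0 < t j)
    (hrefl : ∀ j, Z (j + 1) - Z (j - 1) = t j • R (Z j)) :
    ∃ S : Finset (Fin n), S.card ≤ k / 2 ∧
      ∀ (j : ZMod k) (m : Fin n), m ∉ S → Z j m = 0 := by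
  have : NeZero k := ⟨by lia⟩
  exact stmt_16_general ha hmono.injective (Z := fun j ↦ Z j) (fun j ↦ (ht j).ne') fun j m ↦ by
    simpa [hR] using congrArg (· m) (hrefl j)
end

section
/- Identify ℝ^{2n} with ℂⁿ (n ≥ 1), with real inner product ⟨u,v⟩ = Re(∑ⱼ uⱼ·conj(vⱼ)) and symplectic form ω(u,v) = ⟨i·u, v⟩. Let z₀, z₁ ∈ ℂⁿ with ‖z₀‖ = ‖z₁‖ = 1, and define z₂ = z₀ + 2·ω(z₀,z₁)·(i·z₁). Then ‖z₂‖ = 1 and ω(z₁, z₂) = ω(z₀, z₁). -/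
/-- The standard symplectic form `ω(u,v) = ⟨i·u, v⟩` on `ℂⁿ ≅ ℝ^{2n}`. -/
noncomputable def symp {n : ℕ} (u v : EuclideanSpace ℂ (Fin n)) : ℝ :=
  rinner (Complex.I • u) v

/-! With respect to the real inner product, `z₂` is the reflection of `z₀` in the real hyperplane
orthogonal to the unit vector `I • z₁`, because `⟨I • z₀, z₁⟩ = -⟨I • z₁, z₀⟩`. A reflection
preserves norms and reverses the component along the normal, and that component is `ω(z₁, ·)`. -/

section Reflection

variable {𝕜 E : Type*} [RCLike 𝕜] [NormedAddCommGroup E] [InnerProductSpace 𝕜 E]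

theorem reflection_orthogonal_unit_singleton_apply {u : E} (hu : ‖u‖ = 1) (v : E) :
    (𝕜 ∙ u)ᗮ.reflection v = v - (2 * inner 𝕜 u v) • u := by
  rw [Submodule.reflection_orthogonal_apply, Submodule.reflection_apply,
    Submodule.starProjection_unit_singleton 𝕜 hu, neg_sub, mul_smul, ofNat_smul_eq_nsmul 𝕜 2]

theorem inner_reflection_orthogonal_singleton (u v : E) :
    inner 𝕜 u ((𝕜 ∙ u)ᗮ.reflection v) = -inner 𝕜 u v := by
  calc inner 𝕜 u ((𝕜 ∙ u)ᗮ.reflection v)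
      = -inner 𝕜 ((𝕜 ∙ u)ᗮ.reflection u) ((𝕜 ∙ u)ᗮ.reflection v) := by
        rw [Submodule.reflection_orthogonalComplement_singleton_eq_neg, inner_neg_left, neg_neg]
    _ = -inner 𝕜 u v := by rw [LinearIsometryEquiv.inner_map_map]

end Reflection

theorem re_inner_I_smul_antisymm {E : Type*} [SeminormedAddCommGroup E] [InnerProductSpace ℂ E]
    (u v : E) : (inner ℂ (Complex.I • u) v).re = -(inner ℂ (Complex.I • v) u).re := by
  rw [← inner_conj_symm (Complex.I • v) u, Complex.conj_re, inner_smul_left, inner_smul_right,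
    Complex.conj_I, neg_mul, Complex.neg_re]

theorem stmt_17_general {E : Type*} [NormedAddCommGroup E] [InnerProductSpace ℂ E] {z₀ z₁ z₂ : E}
    (h₁ : ‖z₁‖ = 1)
    (h₂ : z₂ = z₀ + (2 * (inner ℂ (Complex.I • z₀) z₁).re) • (Complex.I • z₁)) :
    ‖z₂‖ = ‖z₀‖ ∧
      (inner ℂ (Complex.I • z₁) z₂).re = (inner ℂ (Complex.I • z₀) z₁).re := by
  let _ : InnerProductSpace ℝ E := InnerProductSpace.complexToReal
  have real_inner_eq (x y : E) : inner ℝ x y = (inner ℂ x y).re := real_inner_eq_re_inner ℂ x y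
  have norm_I_smul : ‖Complex.I • z₁‖ = 1 := by rw [norm_smul, Complex.norm_I, one_mul, h₁]
  have eq_reflection : z₂ = (ℝ ∙ (Complex.I • z₁))ᗮ.reflection z₀ := by
    rw [reflection_orthogonal_unit_singleton_apply norm_I_smul, real_inner_eq, h₂,
      re_inner_I_smul_antisymm, mul_neg, neg_smul, ← sub_eq_add_neg]
  constructor
  · rw [eq_reflection, LinearIsometryEquiv.norm_map]
  · calc (inner ℂ (Complex.I • z₁) z₂).re
      _ = -(inner ℂ (Complex.I • z₁) z₀).re := by
        rw [eq_reflection, ← real_inner_eq, inner_reflection_orthogonal_singleton, real_inner_eq]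
      _ = (inner ℂ (Complex.I • z₀) z₁).re := (re_inner_I_smul_antisymm z₀ z₁).symm

/-- The symplectic billiard map in the round unit sphere,
`z₂ = z₀ + 2ω(z₀,z₁)·(i·z₁)`, is well defined (`‖z₂‖ = 1`) and `ω(z₀,z₁)` is an integral:
`ω(z₁,z₂) = ω(z₀,z₁)`. -/
theorem stmt_17 (n : ℕ) (hn : 1 ≤ n) (z₀ z₁ z₂ : EuclideanSpace ℂ (Fin n))
    (h₀ : ‖z₀‖ = 1) (h₁ : ‖z₁‖ = 1)
    (h₂ : z₂ = z₀ + (2 * symp z₀ z₁) • (Complex.I • z₁)) :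
    ‖z₂‖ = 1 ∧ symp z₁ z₂ = symp z₀ z₁ := by
  obtain ⟨norm_eq, symp_eq⟩ := stmt_17_general h₁ h₂
  exact ⟨norm_eq.trans h₀, symp_eq⟩
end

section
/- Identify ℝ^{2n} with ℂⁿ (n ≥ 1). Let p ∈ ℤ and q ≥ 1 be integers, set α = 2πp/q and assume cos α ≠ 0. Let z₀, z₁ ∈ ℂⁿ and define (z_m) by z_{m+2} = z_m + (2 sin α)·(i·z_{m+1}) for all m ≥ 0. Then: (a) z_{m+2q} = z_m for all m ≥ 0; (b) if q is even, then z_{m+q} = z_m for all m ≥ 0; (c) if q is odd, then z_q = z₀ if and only if z₁ = exp(iα)·z₀. -/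
open Real

/-!
The recurrence has characteristic roots `a = e^{iα}` and `b = -e^{-iα}`, whose difference
`a - b = 2 cos α` is nonzero. If `a ^ k = 1`, then only the mode of `b` obstructs the period `k`:
`(a - b) (z_{m+k} - z_m) = b ^ m (1 - b ^ k) (z₁ - a z₀)`. Since `a ^ q = 1` and `a b = -1`, the
factor `1 - b ^ k` vanishes for `k = 2q` and for `k = q` even, and equals `2` for `k = q` odd.
-/

section Recurrence

variable {R M : Type*} [CommRing R] [AddCommGroup M] [Module R M] {a b : R} {u : ℕ → M} {k : ℕ}

/-- The sequence `u` satisfies the second-order linear recurrence with characteristic polynomial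
`(X - a) * (X - b)`. Mathlib's `LinearRecurrence` only covers sequences in the scalars, whereas
here they take values in a module. -/
def HasCharRoots (a b : R) (u : ℕ → M) : Prop :=
  ∀ m, u (m + 2) = (a + b) • u (m + 1) - (a * b) • u m

namespace HasCharRoots

theorem symm (h : HasCharRoots a b u) : HasCharRoots b a u := fun m ↦ by
  rw [h m, add_comm a, mul_comm a]

theorem apply_succ_sub_smul_apply (h : HasCharRoots a b u) (m : ℕ) :
    u (m + 1) - b • u m = a ^ m • (u 1 - b • u 0) := by
  induction m with
  | zero => simp
  | succ m ih =>
    calc u (m + 2) - b • u (m + 1) = a • (u (m + 1) - b • u m) := by rw [h m]; module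
      _ = a ^ (m + 1) • (u 1 - b • u 0) := by rw [ih, smul_smul, pow_succ']

theorem sub_smul_apply (h : HasCharRoots a b u) (m : ℕ) :
    (a - b) • u m = a ^ m • (u 1 - b • u 0) - b ^ m • (u 1 - a • u 0) := by
  rw [← h.apply_succ_sub_smul_apply, ← h.symm.apply_succ_sub_smul_apply]
  module

theorem sub_smul_apply_add_sub (h : HasCharRoots a b u) (ha : a ^ k = 1) (m : ℕ) :
    (a - b) • (u (m + k) - u m) = (b ^ m * (1 - b ^ k)) • (u 1 - a • u 0) := by
  rw [smul_sub, h.sub_smul_apply, h.sub_smul_apply, pow_add, pow_add, ha]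
  module

theorem periodic (h : HasCharRoots a b u) (hab : IsSMulRegular M (a - b))
    (ha : a ^ k = 1) (hb : b ^ k = 1) : Function.Periodic u k := fun m ↦
  sub_eq_zero.mp <| hab.right_eq_zero_of_smul <| by
    rw [h.sub_smul_apply_add_sub ha, hb, sub_self, mul_zero, zero_smul]

theorem apply_eq_apply_zero_iff (h : HasCharRoots a b u) (hab : IsSMulRegular M (a - b))
    (ha : a ^ k = 1) (hb : IsSMulRegular M (1 - b ^ k)) : u k = u 0 ↔ u 1 = a • u 0 := by
  have hk : (a - b) • (u k - u 0) = (1 - b ^ k) • (u 1 - a • u 0) := by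
    simpa only [zero_add, pow_zero, one_mul] using h.sub_smul_apply_add_sub ha 0
  constructor
  · intro hper
    rw [hper, sub_self, smul_zero] at hk
    exact sub_eq_zero.mp (hb.right_eq_zero_of_smul hk.symm)
  · intro heigen
    rw [heigen, sub_self, smul_zero] at hk
    exact sub_eq_zero.mp (hab.right_eq_zero_of_smul hk)

end HasCharRoots

end Recurrence

theorem hasCharRoots_exp_mul_I {E : Type*} [AddCommGroup E] [Module ℂ E] {θ : ℂ} {z : ℕ → E}
    (hrec : ∀ m, z (m + 2) = z m + (2 * Complex.sin θ * Complex.I) • z (m + 1)) :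
    HasCharRoots (Complex.exp (θ * Complex.I)) (-Complex.exp (-θ * Complex.I)) z := fun m ↦ by
  have hsum : Complex.exp (θ * Complex.I) + -Complex.exp (-θ * Complex.I) =
      2 * Complex.sin θ * Complex.I := by
    rw [Complex.two_sin]
    linear_combination (Complex.exp (θ * Complex.I) - Complex.exp (-θ * Complex.I)) * Complex.I_sq
  have hprod : Complex.exp (θ * Complex.I) * -Complex.exp (-θ * Complex.I) = -1 := by
    rw [mul_neg, ← Complex.exp_add, neg_mul, add_neg_cancel, Complex.exp_zero]
  rw [hrec, hsum, hprod]
  module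

theorem exp_two_pi_mul_div_mul_I_pow_eq_one (p : ℤ) {q : ℕ} (hq : q ≠ 0) :
    Complex.exp (((2 * π * p / q : ℝ) : ℂ) * Complex.I) ^ q = 1 := by
  rw [← Complex.exp_nat_mul, Complex.exp_eq_one_iff]
  exact ⟨p, by push_cast; field_simp⟩

theorem neg_exp_neg_mul_I_pow {θ : ℂ} {q : ℕ} (h : Complex.exp (θ * Complex.I) ^ q = 1) :
    (-Complex.exp (-θ * Complex.I)) ^ q = (-1) ^ q := by
  rw [neg_pow, neg_mul, Complex.exp_neg, inv_pow, h, inv_one, mul_one]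

theorem stmt_19_general {E : Type*} [AddCommGroup E] [Module ℂ E] (p : ℤ) {q : ℕ} (hq : q ≠ 0)
    {α : ℝ} (hα : α = 2 * π * p / q) (hcos : Real.cos α ≠ 0) {z : ℕ → E}
    (hrec : ∀ m, z (m + 2) = z m + (2 * Real.sin α) • (Complex.I • z (m + 1))) :
    Function.Periodic z (2 * q) ∧
    (Even q → Function.Periodic z q) ∧
    (Odd q → (z q = z 0 ↔ z 1 = Complex.exp ((α : ℂ) * Complex.I) • z 0)) := by
  have hroots := hasCharRoots_exp_mul_I (θ := α) (z := z) fun m ↦ by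
    rw [hrec, ← Complex.coe_smul, smul_smul]; push_cast; rfl
  set a := Complex.exp (α * Complex.I)
  set b := -Complex.exp (-α * Complex.I) with hb
  have hab : IsSMulRegular E (a - b) := by
    rw [hb, sub_neg_eq_add, ← Complex.two_cos, ← Complex.ofReal_cos]
    exact .of_ne_zero (mul_ne_zero two_ne_zero (Complex.ofReal_ne_zero.mpr hcos))
  have haq : a ^ q = 1 := by subst hα; exact exp_two_pi_mul_div_mul_I_pow_eq_one p hq
  have hbq : b ^ q = (-1) ^ q := neg_exp_neg_mul_I_pow haq
  refine ⟨hroots.periodic hab ?_ ?_, fun heven ↦ hroots.periodic hab haq ?_,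
    fun hodd ↦ hroots.apply_eq_apply_zero_iff hab haq ?_⟩
  · rw [pow_mul', haq, one_pow]
  · rw [pow_mul', hbq, ← pow_mul', (even_two_mul q).neg_one_pow]
  · rw [hbq, heven.neg_one_pow]
  · rw [hbq, hodd.neg_one_pow, sub_neg_eq_add, one_add_one_eq_two]
    exact .of_ne_zero two_ne_zero

/-- Let `α = 2πp/q` (`p ∈ ℤ`, `q ≥ 1`) with `cos α ≠ 0`, and let `(z_m)`
in `ℂⁿ` satisfy `z_{m+2} = z_m + (2 sin α)·(i·z_{m+1})`.  Then: (a) `z_{m+2q} = z_m` for all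
`m`; (b) if `q` is even, `z_{m+q} = z_m` for all `m`; (c) if `q` is odd, `z_q = z₀` iff
`z₁ = e^{iα}·z₀`. -/
theorem stmt_19 (n : ℕ) (hn : 1 ≤ n) (p : ℤ) (q : ℕ) (hq : 1 ≤ q)
    (α : ℝ) (hα : α = 2 * π * p / q) (hcos : Real.cos α ≠ 0)
    (z : ℕ → EuclideanSpace ℂ (Fin n))
    (hrec : ∀ m, z (m + 2) = z m + (2 * Real.sin α) • (Complex.I • z (m + 1))) :
    (∀ m, z (m + 2 * q) = z m) ∧
    (Even q → ∀ m, z (m + q) = z m) ∧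
    (Odd q → (z q = z 0 ↔ z 1 = Complex.exp ((α : ℂ) * Complex.I) • z 0)) :=
  stmt_19_general p (Nat.one_le_iff_ne_zero.mp hq) hα hcos hrec
end
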